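/- Let k be a positive integer such that there exists no binary extremal doubly even self-dual code of length 24k (a condition known to hold for every k ≥ 154). Then the minimum Lee weight of every self-dual Z4-code of length 24k is neither 8k+2 nor 8k+4; combined with Rains's bound d_L ≤ 8k+4 for such codes, the minimum Lee weight is at most 8k. -/

import Mathlib

open Finset

namespace Z4Note

variable {ι : Type*} [Fintype ι]

/-- Hamming weight of a binary vector. -/
def hWt (x : ι → ZMod 2) : ℕ := (Finset.univ.filter fun i => x i ≠ 0).card

/-- Lee value of an element of `ZMod 4`:  0 ↦ 0, 1 ↦ 1, 2 ↦ 2, 3 ↦ 1. -/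
def leeVal (a : ZMod 4) : ℕ := min a.val (4 - a.val)

/-- Lee weight `n₁(x) + 2 n₂(x) + n₃(x)`. -/
def leeWt (x : ι → ZMod 4) : ℕ := ∑ i, leeVal (x i)

/-- Euclidean weight `n₁(x) + 4 n₂(x) + n₃(x)`. -/
def eucWt (x : ι → ZMod 4) : ℕ := ∑ i, (leeVal (x i)) ^ 2

/-- Number of coordinates of `x` equal to `a`. -/
def nCount (a : ZMod 4) (x : ι → ZMod 4) : ℕ := (Finset.univ.filter fun i => x i = a).card

/-- Dual of a `ZMod 4`-code (as a set), w.r.t. the standard inner product. -/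
def dualZ4 (C : Set (ι → ZMod 4)) : Set (ι → ZMod 4) :=
  {x | ∀ y ∈ C, ∑ i, x i * y i = 0}

/-- Dual of a binary code (as a set), w.r.t. the standard inner product. -/
def dual2 (C : Set (ι → ZMod 2)) : Set (ι → ZMod 2) :=
  {x | ∀ y ∈ C, ∑ i, x i * y i = 0}

/-- A `ZMod 4`-code is self-dual if it equals its dual. -/
def SelfDualZ4 (C : Submodule (ZMod 4) (ι → ZMod 4)) : Prop :=
  (C : Set (ι → ZMod 4)) = dualZ4 (C : Set (ι → ZMod 4))

/-- A binary code is self-dual if it equals its dual. -/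
def SelfDual2 (D : Submodule (ZMod 2) (ι → ZMod 2)) : Prop :=
  (D : Set (ι → ZMod 2)) = dual2 (D : Set (ι → ZMod 2))

/-- Coordinatewise reduction modulo 2. -/
def res2 (x : ι → ZMod 4) : ι → ZMod 2 :=
  fun i => ZMod.castHom (by norm_num : (2:ℕ) ∣ 4) (ZMod 2) (x i)

/-- The residue code `C⁽¹⁾ = {c mod 2 : c ∈ C}`. -/
def residue (C : Set (ι → ZMod 4)) : Set (ι → ZMod 2) := res2 '' C

/-- Minimum Lee weight among nonzero codewords. -/
noncomputable def minLee (C : Set (ι → ZMod 4)) : ℕ := sInf {d | ∃ x ∈ C, x ≠ 0 ∧ leeWt x = d}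

/-- Minimum Euclidean weight among nonzero codewords. -/
noncomputable def minEuc (C : Set (ι → ZMod 4)) : ℕ := sInf {d | ∃ x ∈ C, x ≠ 0 ∧ eucWt x = d}

/-- Minimum Hamming weight among nonzero codewords of a binary code. -/
noncomputable def minHam (C : Set (ι → ZMod 2)) : ℕ := sInf {d | ∃ x ∈ C, x ≠ 0 ∧ hWt x = d}

/-- A binary code is doubly even if all weights are divisible by 4. -/
def DoublyEven (C : Set (ι → ZMod 2)) : Prop := ∀ x ∈ C, 4 ∣ hWt x

/-- A binary code is singly even if some codeword has weight not divisible by 4. -/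
def SinglyEven (C : Set (ι → ZMod 2)) : Prop := ∃ x ∈ C, ¬ 4 ∣ hWt x

/-- A self-dual `ZMod 4`-code is Type II if all Euclidean weights are divisible by 8. -/
def TypeII (C : Set (ι → ZMod 4)) : Prop := ∀ x ∈ C, 8 ∣ eucWt x

/-- The doubly even subcode of a binary code. -/
def evenSubcode (D : Set (ι → ZMod 2)) : Set (ι → ZMod 2) := {x ∈ D | 4 ∣ hWt x}

/-- The shadow `S = D₀^⊥ \ D` of a binary code. -/
def shadow (D : Set (ι → ZMod 2)) : Set (ι → ZMod 2) := dual2 (evenSubcode D) \ D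

/-- A binary singly even self-dual code is s-extremal if equality holds in the
Bachoc–Gaborit bound relating the minimum weight of the code and of its shadow. -/
def SExtremal (D : Submodule (ZMod 2) (ι → ZMod 2)) : Prop :=
  SelfDual2 D ∧ SinglyEven (D : Set (ι → ZMod 2)) ∧
  ((¬ (Fintype.card ι % 24 = 22 ∧
        minHam (D : Set (ι → ZMod 2)) = 4 * (Fintype.card ι / 24) + 6)) →
      minHam (shadow (D : Set (ι → ZMod 2))) + 2 * minHam (D : Set (ι → ZMod 2)) =
        Fintype.card ι / 2 + 4) ∧
  ((Fintype.card ι % 24 = 22 ∧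
        minHam (D : Set (ι → ZMod 2)) = 4 * (Fintype.card ι / 24) + 6) →
      minHam (shadow (D : Set (ι → ZMod 2))) + 2 * minHam (D : Set (ι → ZMod 2)) =
        Fintype.card ι / 2 + 8)

/-- Equivalence of `ZMod 4`-codes: coordinate permutation together with sign changes. -/
def Z4Equiv (C C' : Set (ι → ZMod 4)) : Prop :=
  ∃ σ : Equiv.Perm ι, ∃ ε : ι → ZMod 4, (∀ i, ε i = 1 ∨ ε i = -1) ∧
    C' = (fun x => fun i => ε i * x (σ i)) '' C

/-- Covering radius of a binary code. -/
noncomputable def covRad (C : Set (ι → ZMod 2)) : ℕ :=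
  sInf {R | ∀ v : ι → ZMod 2, ∃ c ∈ C, hWt (v - c) ≤ R}

/-- Entry `(i,j)` of the circulant matrix with first row `r`. -/
def circEntry {m : ℕ} (r : Fin m → ZMod 4) (i j : Fin m) : ZMod 4 := r (j - i)

/-- Entry `(i,j)` of the negacirculant matrix with first row `r`. -/
def negaEntry {m : ℕ} (r : Fin m → ZMod 4) (i j : Fin m) : ZMod 4 :=
  if i.val ≤ j.val then r (j - i) else - r (j - i)

/-- The bordered part `B` of the generator matrix of a bordered double circulant code. -/
def bdcB {m : ℕ} (α β γ : ZMod 4) (r : Fin m → ZMod 4) :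
    Fin (m+1) → Fin (m+1) → ZMod 4 :=
  Fin.cases (Fin.cases α fun _ => β) (fun i' => Fin.cases γ fun j' => circEntry r i' j')

/-- Row `i` of the generator matrix `(I | B)` of a bordered double circulant code. -/
def bdcRow {m : ℕ} (α β γ : ZMod 4) (r : Fin m → ZMod 4) (i : Fin (m+1)) :
    (Fin (m+1) ⊕ Fin (m+1)) → ZMod 4 :=
  Sum.elim (fun j => if j = i then 1 else 0) (bdcB α β γ r i)

/-- The bordered double circulant code of length `2(m+1)`. -/
def bdcCode {m : ℕ} (α β γ : ZMod 4) (r : Fin m → ZMod 4) :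
    Submodule (ZMod 4) ((Fin (m+1) ⊕ Fin (m+1)) → ZMod 4) :=
  Submodule.span (ZMod 4) (Set.range (bdcRow α β γ r))

/-- The block matrix `[[A, B], [-Bᵀ, Aᵀ]]` built from negacirculant `A`, `B`. -/
def fourNegaM {n : ℕ} (a b : Fin n → ZMod 4) :
    (Fin n ⊕ Fin n) → (Fin n ⊕ Fin n) → ZMod 4
  | Sum.inl i, Sum.inl j => negaEntry a i j
  | Sum.inl i, Sum.inr j => negaEntry b i j
  | Sum.inr i, Sum.inl j => - negaEntry b j i
  | Sum.inr i, Sum.inr j => negaEntry a j i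

/-- Row `i` of the generator matrix `(I | M)` of a four-negacirculant code. -/
def fourNegaRow {n : ℕ} (a b : Fin n → ZMod 4) (i : Fin n ⊕ Fin n) :
    ((Fin n ⊕ Fin n) ⊕ (Fin n ⊕ Fin n)) → ZMod 4 :=
  Sum.elim (fun j => if j = i then 1 else 0) (fourNegaM a b i)

/-- The four-negacirculant code of length `4n`. -/
def fourNegaCode {n : ℕ} (a b : Fin n → ZMod 4) :
    Submodule (ZMod 4) (((Fin n ⊕ Fin n) ⊕ (Fin n ⊕ Fin n)) → ZMod 4) :=
  Submodule.span (ZMod 4) (Set.range (fourNegaRow a b))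

end Z4Note

/-!
The residue code of a self-dual `ZMod 4`-code `C` is doubly even. When `8 ∣ n` it lies in a doubly
even self-dual binary code `D`: for a maximal doubly even code `D`, the dual code consists of `D`
and words of weight `2` modulo `4`, and the Gauss sum `∑ i ^ wt x = (1 + i) ^ n > 0` over the dual
code leaves no room for a coset of the latter. Since `D` is contained in the dual of the residue
code, `2 D ⊆ C`, so `d_L(C) ≤ 2 d(D)`. The Mallows–Sloane bound `d(D) ≤ 4 ⌊n / 24⌋ + 4`, the
divisibility `4 ∣ d(D)` and the absence of extremal codes then give `d(D) ≤ 4 ⌊n / 24⌋`.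

The Mallows–Sloane bound is proved by linear programming duality. If `W(a, b)` is the weight
enumerator of `D`, then `W(1 + X, 1 - X) = |D| W(1, X)` by MacWilliams. Apply `∂²/∂a∂b` to both
sides and pair with a suitable power series. On the left, the words `0` and `1` disappear, and every
other word contributes the residue at `X = 0` of `P(t) dt`, where `P` is a polynomial and
`t = (1 + X) ^ 4 / (X (1 + X ^ 2))`; such a residue is zero. If all nonzero weights of `D` exceeded
the bound, only the constant term of `W(1, X)` would matter on the right, and its contribution is
positive.
-/

namespace Z4Note

section PowerSeries

open PowerSeries

/-- The subsemiring of power series all of whose coefficients are nonnegative. -/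
def nonnegCoeff (R : Type*) [Semiring R] [PartialOrder R] [IsOrderedRing R] :
    Subsemiring R⟦X⟧ where
  carrier := {f | ∀ n, 0 ≤ coeff n f}
  zero_mem' n := by simp
  one_mem' n := by rw [coeff_one]; split_ifs <;> simp
  add_mem' hf hg n := by rw [map_add]; exact add_nonneg (hf n) (hg n)
  mul_mem' hf hg n := by
    rw [coeff_mul]
    exact sum_nonneg fun p _ => mul_nonneg (hf p.1) (hg p.2)

lemma X_mem_nonnegCoeff {R : Type*} [Semiring R] [PartialOrder R] [IsOrderedRing R] :
    (X : R⟦X⟧) ∈ nonnegCoeff R := by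
  intro n
  rw [coeff_X]
  split_ifs <;> simp

lemma coeff_mul_constantCoeff_le_coeff_mul {R : Type*} [Semiring R] [PartialOrder R]
    [IsOrderedRing R] {f g : R⟦X⟧} (hf : f ∈ nonnegCoeff R) (hg : g ∈ nonnegCoeff R) (n : ℕ) :
    coeff n f * constantCoeff g ≤ coeff n (f * g) := by
  rw [coeff_mul, ← coeff_zero_eq_constantCoeff_apply]
  exact single_le_sum (f := fun p : ℕ × ℕ => coeff p.1 f * coeff p.2 g)
    (fun p _ => mul_nonneg (hf p.1) (hg p.2)) (a := (n, 0)) (by simp)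

lemma coeff_inv_one_sub_X_pow {K : Type*} [Field K] {d : ℕ} (hd : d ≠ 0) (n : ℕ) :
    coeff n (1 - X ^ d : K⟦X⟧)⁻¹ = if d ∣ n then 1 else 0 := by
  have hinv : expand d hd (mk 1 : K⟦X⟧) = (1 - X ^ d)⁻¹ := by
    rw [eq_inv_iff_mul_eq_one (by simp [hd])]
    simpa using congrArg (expand d hd) (mk_one_mul_one_sub_eq_one K)
  rw [← hinv, coeff_expand]
  simp

lemma inv_one_sub_X_pow_mem_nonnegCoeff {K : Type*} [Field K] [PartialOrder K]
    [IsOrderedRing K] {d : ℕ} (hd : d ≠ 0) : (1 - X ^ d : K⟦X⟧)⁻¹ ∈ nonnegCoeff K := by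
  intro n
  rw [coeff_inv_one_sub_X_pow hd]
  split_ifs <;> simp

/-- The residue of the exact form `d ((G / X) ^ (i + 1))` vanishes. -/
lemma coeff_pow_mul_sub_X_mul_derivative {R : Type*} [CommRing R] [IsAddTorsionFree R]
    (G : R⟦X⟧) (i : ℕ) : coeff (i + 1) (G ^ i * (G - X * d⁄dX R G)) = 0 := by
  have hderiv : (i + 1) • coeff (i + 1) (G ^ (i + 1)) = (i + 1) • coeff i (G ^ i * d⁄dX R G) := by
    have h := coeff_derivative (G ^ (i + 1)) i
    rw [derivative_pow, Nat.add_sub_cancel, mul_assoc, ← nsmul_eq_mul, map_nsmul] at h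
    rw [h, nsmul_eq_mul]
    push_cast
    ring
  have hcancel := nsmul_right_injective i.succ_ne_zero hderiv
  calc coeff (i + 1) (G ^ i * (G - X * d⁄dX R G))
      = coeff (i + 1) (G ^ (i + 1) - X * (G ^ i * d⁄dX R G)) := by congr 1; ring
    _ = 0 := by rw [map_sub, coeff_succ_X_mul, hcancel, sub_self]

/-- The residue of `t ^ i * (t - c) ^ j dt` at `t = G / X` vanishes. -/
lemma coeff_pow_mul_sub_X_pow_mul_sub_X_mul_derivative {R : Type*} [CommRing R]
    [IsAddTorsionFree R] (G : R⟦X⟧) (c : R) (i j : ℕ) :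
    coeff (i + j + 1) (G ^ i * (G - C c * X) ^ j * (G - X * d⁄dX R G)) = 0 := by
  induction j generalizing i with
  | zero => simpa using coeff_pow_mul_sub_X_mul_derivative G i
  | succ j ih =>
    have hsplit : G ^ i * (G - C c * X) ^ (j + 1) * (G - X * d⁄dX R G) =
        G ^ (i + 1) * (G - C c * X) ^ j * (G - X * d⁄dX R G) -
          X * (C c * (G ^ i * (G - C c * X) ^ j * (G - X * d⁄dX R G))) := by ring
    have hfst := ih (i + 1)
    rw [add_right_comm i 1 j] at hfst
    rw [hsplit, map_sub, ← add_assoc, hfst, coeff_succ_X_mul, coeff_C_mul, ih i, mul_zero, sub_zero]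

section GleasonResidue

variable {K : Type*} [Field K]

lemma one_add_X_sq_mul_inv : (1 + X ^ 2 : K⟦X⟧) * (1 + X ^ 2)⁻¹ = 1 :=
  PowerSeries.mul_inv_cancel _ (by simp)

lemma one_sub_X_sq_mul_inv : (1 - X ^ 2 : K⟦X⟧) * (1 - X ^ 2)⁻¹ = 1 :=
  PowerSeries.mul_inv_cancel _ (by simp)

lemma sub_X_mul_derivative_one_add_X_pow_four_mul_inv :
    ((1 + X) ^ 4 * (1 + X ^ 2)⁻¹ : K⟦X⟧) - X * d⁄dX K ((1 + X) ^ 4 * (1 + X ^ 2)⁻¹) =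
      (1 - X ^ 2) ^ 3 * (1 + X ^ 2)⁻¹ ^ 2 := by
  have hnum : d⁄dX K ((1 + X) ^ 4 : K⟦X⟧) = 4 * (1 + X) ^ 3 := by
    simp
  have hden : d⁄dX K (1 + X ^ 2 : K⟦X⟧) = 2 * X := by
    simp
  rw [Derivation.leibniz, derivative_inv', hnum, hden]
  simp only [smul_eq_mul]
  linear_combination
    -((1 + X) ^ 4 * (1 + X ^ 2)⁻¹ - 4 * X * (1 + X) ^ 3 * (1 + X ^ 2)⁻¹) *
      one_add_X_sq_mul_inv (K := K)

/-- With `t = (1 + X) ^ 4 / (X * (1 + X ^ 2))` one has `t - 8 = (1 - X) ^ 4 / (X * (1 + X ^ 2))`,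
so that this coefficient is the residue of a polynomial in `t` times `dt`. -/
lemma coeff_one_add_X_pow_mul_one_sub_X_pow_mul [CharZero K] (i j : ℕ) :
    coeff (i + j + 1) ((1 + X) ^ (4 * i) * (1 - X) ^ (4 * j) * (1 - X ^ 2) ^ 3 *
      (1 + X ^ 2)⁻¹ ^ (i + j + 2) : K⟦X⟧) = 0 := by
  have hsub : ((1 + X) ^ 4 * (1 + X ^ 2)⁻¹ : K⟦X⟧) - C 8 * X = (1 - X) ^ 4 * (1 + X ^ 2)⁻¹ := by
    rw [map_ofNat C 8]
    linear_combination 8 * X * one_add_X_sq_mul_inv (K := K)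
  have hres := coeff_pow_mul_sub_X_pow_mul_sub_X_mul_derivative
    ((1 + X) ^ 4 * (1 + X ^ 2)⁻¹ : K⟦X⟧) 8 i j
  rw [hsub, sub_X_mul_derivative_one_add_X_pow_four_mul_inv] at hres
  rw [← hres, mul_pow, mul_pow, ← pow_mul, ← pow_mul]
  congr 1
  ring

end GleasonResidue

/-- The weight of the linear functional `mallowsSloaneFunctional`: on the polar derivatives of the
terms `(1 + X) ^ p * (1 - X) ^ q`, multiplication by it produces the residues of polynomials in `t`
of `coeff_one_add_X_pow_mul_one_sub_X_pow_mul`. -/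
noncomputable def testSeries (a r : ℕ) : ℚ⟦X⟧ :=
  (1 + X) ^ 4 * (1 - X ^ 2)⁻¹ ^ a * (1 + X ^ 2)⁻¹ ^ (r + 1)

lemma coeff_mul_testSeries_eq_zero (a i j : ℕ) :
    coeff (i + j + 2) ((1 + X) ^ (4 * i + a + 3) * (1 - X) ^ (4 * j + a + 3) *
      testSeries a (i + j + 2)) = 0 := by
  have hcancel : ((1 + X) * (1 - X) * (1 - X ^ 2)⁻¹ : ℚ⟦X⟧) ^ a = 1 := by
    rw [show (1 + X) * (1 - X) = (1 - X ^ 2 : ℚ⟦X⟧) by ring, one_sub_X_sq_mul_inv, one_pow]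
  have hprod : (1 + X) ^ (4 * i + a + 3) * (1 - X) ^ (4 * j + a + 3) * testSeries a (i + j + 2) =
      (1 + X) ^ (4 * (i + 1)) * (1 - X) ^ (4 * j) * (1 - X ^ 2) ^ 3 *
        (1 + X ^ 2)⁻¹ ^ (i + 1 + j + 2) := by
    rw [testSeries, show (1 - X ^ 2 : ℚ⟦X⟧) ^ 3 = (1 + X) ^ 3 * (1 - X) ^ 3 by ring]
    rw [mul_pow, mul_pow] at hcancel
    linear_combination ((1 + X) ^ (4 * i + 7) * (1 - X) ^ (4 * j + 3) *
      (1 + X ^ 2)⁻¹ ^ (i + j + 3)) * hcancel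
  rw [hprod, show i + j + 2 = i + 1 + j + 1 by ring]
  exact coeff_one_add_X_pow_mul_one_sub_X_pow_mul (i + 1) j

lemma coeff_testSeries_pos {a r : ℕ} (hr : Even r) (hra : r + 1 < a) :
    0 < coeff r (testSeries a r) := by
  obtain ⟨e, rfl⟩ := Nat.exists_eq_add_of_lt hra
  have hinv : (1 - X ^ 4 : ℚ⟦X⟧)⁻¹ = (1 - X ^ 2)⁻¹ * (1 + X ^ 2)⁻¹ := by
    rw [← PowerSeries.mul_inv_rev]
    congr 1
    ring
  have hfactor : testSeries (r + 1 + e + 1) r =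
      (1 - X ^ 2)⁻¹ * ((1 + X) ^ 4 * (1 - X ^ 2)⁻¹ ^ e * (1 - X ^ 4)⁻¹ ^ (r + 1)) := by
    rw [testSeries, hinv]
    ring
  have hmem : ((1 + X) ^ 4 * (1 - X ^ 2)⁻¹ ^ e * (1 - X ^ 4)⁻¹ ^ (r + 1) : ℚ⟦X⟧) ∈ nonnegCoeff ℚ :=
    mul_mem (mul_mem (pow_mem (add_mem (one_mem _) X_mem_nonnegCoeff) 4)
      (pow_mem (inv_one_sub_X_pow_mem_nonnegCoeff two_ne_zero) e))
      (pow_mem (inv_one_sub_X_pow_mem_nonnegCoeff four_ne_zero) (r + 1))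
  have hle := coeff_mul_constantCoeff_le_coeff_mul
    (inv_one_sub_X_pow_mem_nonnegCoeff two_ne_zero) hmem r
  rw [coeff_inv_one_sub_X_pow two_ne_zero, if_pos hr.two_dvd, ← hfactor] at hle
  exact lt_of_lt_of_le (by simp) hle

/-- The polar derivative with pole `ζ` of `f`, regarded as a form of degree `n`: if
`f = F (1 + X, 1 - X)` with `F` homogeneous of degree `n` in `a`, `b`, the poles `1` and `-1` give
`2 * ∂F/∂a` and `2 * ∂F/∂b` at `(1 + X, 1 - X)`. -/
noncomputable def polarDeriv {R : Type*} [CommRing R] (ζ : R) (n : ℕ) : R⟦X⟧ →ₗ[R] R⟦X⟧ :=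
  n • LinearMap.id + LinearMap.mulLeft R (C ζ - X) ∘ₗ (d⁄dX R).toLinearMap

section polarDeriv

variable {R : Type*} [CommRing R]

lemma polarDeriv_apply (ζ : R) (n : ℕ) (f : R⟦X⟧) :
    polarDeriv ζ n f = (n : R⟦X⟧) * f + (C ζ - X) * d⁄dX R f := by
  simp [polarDeriv]

lemma polarDeriv_one_add_X_pow_mul_one_sub_X_pow (ζ : R) (p q : ℕ) :
    polarDeriv ζ (p + q) ((1 + X) ^ p * (1 - X) ^ q) =
      C (p * (1 + ζ)) * ((1 + X) ^ (p - 1) * (1 - X) ^ q) +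
        C (q * (1 - ζ)) * ((1 + X) ^ p * (1 - X) ^ (q - 1)) := by
  rw [polarDeriv_apply, Derivation.leibniz, derivative_pow, derivative_pow]
  rcases p with _ | p <;> rcases q with _ | q <;> simp <;> ring

lemma polarDeriv_polarDeriv_one_add_X_pow_mul_one_sub_X_pow (p q : ℕ) :
    polarDeriv (1 : R) (p + q - 1) (polarDeriv (-1) (p + q) ((1 + X) ^ p * (1 - X) ^ q)) =
      C (4 * p * q : R) * ((1 + X) ^ (p - 1) * (1 - X) ^ (q - 1)) := by
  rw [polarDeriv_one_add_X_pow_mul_one_sub_X_pow]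
  rcases q with _ | q
  · simp
  · rw [← smul_eq_C_mul, ← smul_eq_C_mul, map_add, map_smul, map_smul, ← add_assoc,
      Nat.add_sub_cancel, Nat.add_sub_cancel, polarDeriv_one_add_X_pow_mul_one_sub_X_pow]
    simp [smul_eq_C_mul, map_ofNat C 4]
    ring

lemma X_pow_dvd_polarDeriv (ζ : R) (n : ℕ) {d : ℕ} {f : R⟦X⟧} (hf : X ^ (d + 1) ∣ f) :
    X ^ d ∣ polarDeriv ζ n f := by
  obtain ⟨g, rfl⟩ := hf
  rw [polarDeriv_apply, Derivation.leibniz, derivative_pow]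
  refine ⟨(n : R⟦X⟧) * X * g + (C ζ - X) * (X * d⁄dX R g + ((d : R⟦X⟧) + 1) * g), ?_⟩
  simp
  ring

lemma polarDeriv_polarDeriv_one (n : ℕ) :
    polarDeriv (1 : R) (n - 1) (polarDeriv (-1) n 1) = C (n * (n - 1 : ℕ) : R) := by
  simp [polarDeriv_apply, mul_comm]

end polarDeriv

end PowerSeries

variable {ι : Type*} [Fintype ι]

section Weight

lemma hWt_zero : hWt (0 : ι → ZMod 2) = 0 := hammingNorm_zero

lemma hWt_one : hWt (1 : ι → ZMod 2) = Fintype.card ι := by simp [hWt]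

lemma hWt_le_card (x : ι → ZMod 2) : hWt x ≤ Fintype.card ι := hammingNorm_le_card_fintype

/-- The number of coordinates in which the supports of two binary vectors overlap, an integral
lift of their inner product. -/
def overlap (x y : ι → ZMod 2) : ℕ := #{i | x i ≠ 0 ∧ y i ≠ 0}

lemma overlap_one (x : ι → ZMod 2) : overlap x 1 = hWt x := by simp [overlap, hWt]

lemma hWt_add (x y : ι → ZMod 2) : hWt (x + y) + 2 * overlap x y = hWt x + hWt y := by
  have hcoord : ∀ a b : ZMod 2,
      (if a + b ≠ 0 then 1 else 0) + 2 * (if a ≠ 0 ∧ b ≠ 0 then 1 else 0) =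
        (if a ≠ 0 then 1 else 0) + if b ≠ 0 then 1 else 0 := by decide
  simp only [hWt, overlap, card_filter, mul_sum, ← sum_add_distrib, Pi.add_apply, hcoord]

lemma hWt_add_one (x : ι → ZMod 2) : hWt (x + 1) + hWt x = Fintype.card ι := by
  have hadd := hWt_add x 1
  rw [overlap_one, hWt_one] at hadd
  omega

lemma natCast_overlap (x y : ι → ZMod 2) : (overlap x y : ZMod 2) = x ⬝ᵥ y := by
  have hcoord : ∀ a b : ZMod 2, (if a ≠ 0 ∧ b ≠ 0 then 1 else 0) = a * b := by decide
  simp only [overlap, dotProduct, natCast_card_filter, hcoord]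

lemma dotProduct_eq_zero_iff_even_overlap {x y : ι → ZMod 2} :
    x ⬝ᵥ y = 0 ↔ Even (overlap x y) := by
  rw [← natCast_overlap, ZMod.natCast_eq_zero_iff_even]

end Weight

section MacWilliams

lemma prod_ite_eq_zero {R : Type*} [CommMonoid R] (x : ι → ZMod 2) (a b : R) :
    ∏ i, (if x i = 0 then a else b) = a ^ (Fintype.card ι - hWt x) * b ^ hWt x := by
  have hcompl := card_filter_add_card_filter_not (s := (univ : Finset ι)) (fun i => x i = 0)
  rw [prod_ite, prod_const, prod_const, hWt, ← card_univ, ← hcompl, Nat.add_sub_cancel]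

/-- The weight enumerator `∑ a ^ (n - wt x) * b ^ wt x` of a binary code of length `n`, evaluated
at a point `(a, b)` of a commutative ring. -/
noncomputable def weightEnumerator {R : Type*} [CommRing R] (D : Set (ι → ZMod 2)) (a b : R) : R :=
  ∑ x ∈ D.toFinite.toFinset, a ^ (Fintype.card ι - hWt x) * b ^ hWt x

lemma weightEnumerator_eq_sum_prod {R : Type*} [CommRing R] (D : Set (ι → ZMod 2)) (a b : R) :
    weightEnumerator D a b = ∑ x ∈ D.toFinite.toFinset, ∏ i, if x i = 0 then a else b := by
  simp only [weightEnumerator, prod_ite_eq_zero]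

variable (R : Type*) [CommRing R]

/-- The character `x ↦ (-1) ^ x` of `ZMod 2`. -/
def signChar : AddChar (ZMod 2) R := AddChar.zmodChar 2 (neg_one_sq : (-1 : R) ^ 2 = 1)

lemma signChar_one : signChar R 1 = -1 := by
  rw [signChar, AddChar.zmodChar_apply, ZMod.val_one, pow_one]

lemma signChar_eq_one_iff {R : Type*} [CommRing R] (h2 : (2 : R) ≠ 0) {t : ZMod 2} :
    signChar R t = 1 ↔ t = 0 := by
  obtain rfl | rfl : t = 0 ∨ t = 1 := by decide +revert
  · simp
  · simpa [signChar_one, neg_eq_iff_add_eq_zero, one_add_one_eq_two] using h2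

lemma ite_add_sub_eq_sum_signChar (a b : R) (t : ZMod 2) :
    (if t = 0 then a + b else a - b) = ∑ s, (if s = 0 then a else b) * signChar R (s * t) := by
  have huniv : (univ : Finset (ZMod 2)) = {0, 1} := rfl
  obtain rfl | rfl : t = 0 ∨ t = 1 := by decide +revert
  · simp [huniv]
  · simp [huniv, signChar_one, sub_eq_add_neg]

lemma signChar_dotProduct (x y : ι → ZMod 2) :
    signChar R (x ⬝ᵥ y) = ∏ i, signChar R (x i * y i) :=
  map_prod (signChar R).toMonoidHom (fun i => Multiplicative.ofAdd (x i * y i)) univ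

/-- The character `y ↦ (-1) ^ (x ⬝ᵥ y)` of a binary code. -/
def dotProductChar (D : Submodule (ZMod 2) (ι → ZMod 2)) (x : ι → ZMod 2) : AddChar D R :=
  (signChar R).compAddMonoidHom
    ((dotProductBilin (ZMod 2) (ZMod 2) x).toAddMonoidHom.comp D.subtype.toAddMonoidHom)

lemma dotProductChar_apply (D : Submodule (ZMod 2) (ι → ZMod 2)) (x : ι → ZMod 2) (y : D) :
    dotProductChar R D x y = signChar R (x ⬝ᵥ y) := rfl

variable {R}

lemma dotProductChar_eq_zero_iff (h2 : (2 : R) ≠ 0) {D : Submodule (ZMod 2) (ι → ZMod 2)}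
    {x : ι → ZMod 2} : dotProductChar R D x = 0 ↔ x ∈ dual2 (D : Set (ι → ZMod 2)) := by
  simp only [AddChar.eq_zero_iff, dotProductChar_apply, signChar_eq_one_iff h2, Subtype.forall]
  rfl

open Classical in
lemma sum_signChar_dotProduct [IsDomain R] (h2 : (2 : R) ≠ 0)
    (D : Submodule (ZMod 2) (ι → ZMod 2)) (x : ι → ZMod 2) :
    ∑ y ∈ (D : Set (ι → ZMod 2)).toFinite.toFinset, signChar R (x ⬝ᵥ y) =
      if x ∈ dual2 (D : Set (ι → ZMod 2)) then ((D : Set (ι → ZMod 2)).ncard : R) else 0 := by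
  have hmem : ∀ y, y ∈ (D : Set (ι → ZMod 2)).toFinite.toFinset ↔ y ∈ D := by simp
  have hcard : (D : Set (ι → ZMod 2)).ncard = Fintype.card D := by
    rw [← Nat.card_coe_set_eq, Nat.card_eq_fintype_card]
    rfl
  rw [sum_subtype _ hmem, hcard, ← if_congr (dotProductChar_eq_zero_iff h2) rfl rfl,
    ← AddChar.sum_eq_ite]
  rfl

theorem weightEnumerator_add_sub [IsDomain R] (h2 : (2 : R) ≠ 0)
    (D : Submodule (ZMod 2) (ι → ZMod 2)) (a b : R) :
    weightEnumerator (D : Set (ι → ZMod 2)) (a + b) (a - b) =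
      (D : Set (ι → ZMod 2)).ncard * weightEnumerator (dual2 (D : Set (ι → ZMod 2))) a b := by
  classical
  calc weightEnumerator (D : Set (ι → ZMod 2)) (a + b) (a - b)
      = ∑ y ∈ (D : Set (ι → ZMod 2)).toFinite.toFinset, ∑ x : ι → ZMod 2,
          (∏ i, if x i = 0 then a else b) * signChar R (x ⬝ᵥ y) := by
        simp only [weightEnumerator_eq_sum_prod, ite_add_sub_eq_sum_signChar, Fintype.prod_sum,
          prod_mul_distrib, signChar_dotProduct]
    _ = ∑ x : ι → ZMod 2, if x ∈ dual2 (D : Set (ι → ZMod 2)) then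
          (D : Set (ι → ZMod 2)).ncard * ∏ i, (if x i = 0 then a else b) else 0 := by
        rw [sum_comm]
        refine sum_congr rfl fun x _ => ?_
        rw [← mul_sum, sum_signChar_dotProduct h2, mul_ite, mul_zero, mul_comm]
    _ = _ := by
        rw [weightEnumerator_eq_sum_prod, mul_sum, ← sum_filter]
        congr 1
        ext x
        simp

end MacWilliams

section DoublyEven

lemma add_mem_dual2 {D : Set (ι → ZMod 2)} {x y : ι → ZMod 2} (hx : x ∈ dual2 D)
    (hy : y ∈ dual2 D) : x + y ∈ dual2 D := by
  intro z hz
  simp only [Pi.add_apply, add_mul, sum_add_distrib, hx z hz, hy z hz, add_zero]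

lemma dual2_antitone : Antitone (dual2 : Set (ι → ZMod 2) → Set (ι → ZMod 2)) :=
  fun _ _ h _ hx y hy => hx y (h hy)

lemma one_mem_dual2_iff {D : Set (ι → ZMod 2)} : 1 ∈ dual2 D ↔ ∀ x ∈ D, Even (hWt x) := by
  refine forall₂_congr fun x _ => ?_
  rw [← overlap_one, ← dotProduct_eq_zero_iff_even_overlap, dotProduct_comm]
  rfl

lemma DoublyEven.one_mem_dual2 {D : Set (ι → ZMod 2)} (hD : DoublyEven D) : 1 ∈ dual2 D :=
  one_mem_dual2_iff.mpr fun x hx => (hD x hx).even (by decide)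

lemma even_hWt_of_mem_dual2 {D : Set (ι → ZMod 2)} (h1 : 1 ∈ D) {x : ι → ZMod 2}
    (hx : x ∈ dual2 D) : Even (hWt x) := by
  rw [← overlap_one, ← dotProduct_eq_zero_iff_even_overlap]
  exact hx 1 h1

lemma four_dvd_hWt_add_iff {x y : ι → ZMod 2} (hxy : x ⬝ᵥ y = 0) (hy : 4 ∣ hWt y) :
    4 ∣ hWt (x + y) ↔ 4 ∣ hWt x := by
  obtain ⟨m, hm⟩ := dotProduct_eq_zero_iff_even_overlap.mp hxy
  have hadd := hWt_add x y
  omega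

lemma DoublyEven.subset_dual2 {D : Submodule (ZMod 2) (ι → ZMod 2)}
    (hD : DoublyEven (D : Set (ι → ZMod 2))) : (D : Set (ι → ZMod 2)) ⊆ dual2 D := by
  intro x hx y hy
  refine dotProduct_eq_zero_iff_even_overlap.mpr ?_
  have hadd := hWt_add x y
  have hwx := hD x hx
  have hwy := hD y hy
  have hwxy := hD (x + y) (D.add_mem hx hy)
  rw [Nat.even_iff]
  omega

lemma DoublyEven.sup_span_singleton {D : Submodule (ZMod 2) (ι → ZMod 2)}
    (hD : DoublyEven (D : Set (ι → ZMod 2))) {x : ι → ZMod 2}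
    (hx : x ∈ dual2 (D : Set (ι → ZMod 2))) (hx4 : 4 ∣ hWt x) :
    DoublyEven ((D ⊔ Submodule.span (ZMod 2) {x} : Submodule (ZMod 2) (ι → ZMod 2)) :
      Set (ι → ZMod 2)) := by
  intro z hz
  obtain ⟨d, hd, y, hy, rfl⟩ := Submodule.mem_sup.mp hz
  obtain ⟨c, rfl⟩ := Submodule.mem_span_singleton.mp hy
  have hbit : ∀ c : ZMod 2, c = 0 ∨ c = 1 := by decide
  obtain rfl | rfl := hbit c
  · simpa using hD d hd
  · rw [one_smul, add_comm]
    exact (four_dvd_hWt_add_iff (hx d hd) (hD d hd)).mpr hx4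

lemma SelfDual2.one_mem {D : Submodule (ZMod 2) (ι → ZMod 2)} (hsd : SelfDual2 D)
    (hD : DoublyEven (D : Set (ι → ZMod 2))) : 1 ∈ D := by
  rw [← SetLike.mem_coe, hsd]
  exact hD.one_mem_dual2

lemma DoublyEven.weightEnumerator_eq {R : Type*} [CommRing R] {D : Set (ι → ZMod 2)}
    (hD : DoublyEven D) {a b : R} (hab : a ^ 4 = b ^ 4) :
    weightEnumerator D a b = D.ncard * a ^ Fintype.card ι := by
  rw [weightEnumerator, Set.ncard_eq_toFinset_card D, ← nsmul_eq_mul]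
  refine sum_eq_card_nsmul fun x hx => ?_
  obtain ⟨m, hm⟩ := hD x (by simpa using hx)
  have hle := hWt_le_card x
  rw [hm, pow_mul b, ← hab, ← pow_mul, ← hm, ← pow_add, Nat.sub_add_cancel hle]

lemma one_add_I_pow_four : (1 + Complex.I) ^ 4 = -4 := by
  linear_combination (Complex.I ^ 2 + 4 * Complex.I + 5) * Complex.I_sq

lemma one_sub_I_pow_four : (1 - Complex.I) ^ 4 = -4 := by
  linear_combination (Complex.I ^ 2 - 4 * Complex.I + 5) * Complex.I_sq

lemma DoublyEven.weightEnumerator_dual2_one_I {D : Submodule (ZMod 2) (ι → ZMod 2)}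
    (hD : DoublyEven (D : Set (ι → ZMod 2))) :
    weightEnumerator (dual2 (D : Set (ι → ZMod 2))) 1 Complex.I =
      (1 + Complex.I) ^ Fintype.card ι := by
  have hcard : ((D : Set (ι → ZMod 2)).ncard : ℂ) ≠ 0 :=
    Nat.cast_ne_zero.mpr (Set.ncard_ne_zero_of_mem D.zero_mem)
  refine mul_left_cancel₀ hcard ?_
  rw [← weightEnumerator_add_sub two_ne_zero D 1 Complex.I,
    hD.weightEnumerator_eq (one_add_I_pow_four.trans one_sub_I_pow_four.symm)]

theorem SelfDual2.eight_dvd_card {D : Submodule (ZMod 2) (ι → ZMod 2)} (hsd : SelfDual2 D)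
    (hD : DoublyEven (D : Set (ι → ZMod 2))) : 8 ∣ Fintype.card ι := by
  obtain ⟨m, hm⟩ : 4 ∣ Fintype.card ι := hWt_one (ι := ι) ▸ hD 1 (hsd.one_mem hD)
  have hgauss := hD.weightEnumerator_dual2_one_I
  have hsd' : (D : Set (ι → ZMod 2)) = dual2 (D : Set (ι → ZMod 2)) := hsd
  rw [← hsd', hD.weightEnumerator_eq (by simp), one_pow, mul_one, hm, pow_mul,
    one_add_I_pow_four] at hgauss
  have hpow : (((D : Set (ι → ZMod 2)).ncard : ℤ)) = (-4) ^ m := by exact_mod_cast hgauss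
  have heven : Even m := by
    by_contra hodd
    have hneg : (-4 : ℤ) ^ m < 0 := (Nat.not_even_iff_odd.mp hodd).pow_neg (by norm_num)
    omega
  rw [hm]
  exact mul_dvd_mul_left 4 heven.two_dvd

lemma weightEnumerator_sdiff_add {R : Type*} [CommRing R] {D E : Set (ι → ZMod 2)} (hDE : D ⊆ E)
    (a b : R) : weightEnumerator (E \ D) a b + weightEnumerator D a b = weightEnumerator E a b := by
  classical
  have hsdiff : (E \ D).toFinite.toFinset = E.toFinite.toFinset \ D.toFinite.toFinset := by
    ext
    simp
  rw [weightEnumerator, weightEnumerator, weightEnumerator, hsdiff,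
    sum_sdiff (Set.Finite.toFinset_subset_toFinset.mpr hDE)]

lemma weightEnumerator_one_I_of_mod_four_eq_two {D : Set (ι → ZMod 2)}
    (hD : ∀ x ∈ D, hWt x % 4 = 2) : weightEnumerator D 1 Complex.I = -D.ncard := by
  rw [weightEnumerator, Set.ncard_eq_toFinset_card D, neg_eq_neg_one_mul, mul_comm,
    ← nsmul_eq_mul]
  refine sum_eq_card_nsmul fun x hx => ?_
  rw [← Nat.div_add_mod (hWt x) 4, hD x (by simpa using hx), one_pow, one_mul, pow_add, pow_mul,
    Complex.I_pow_four, one_pow, one_mul, Complex.I_sq]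

/-- The Gauss sum of `i ^ wt` over the dual code is `(1 + i) ^ n`, a positive real number. -/
lemma DoublyEven.ncard_sdiff_lt {D : Submodule (ZMod 2) (ι → ZMod 2)}
    (hD : DoublyEven (D : Set (ι → ZMod 2))) (h8 : 8 ∣ Fintype.card ι)
    (hmod : ∀ x ∈ dual2 (D : Set (ι → ZMod 2)) \ D, hWt x % 4 = 2) :
    (dual2 (D : Set (ι → ZMod 2)) \ D).ncard < (D : Set (ι → ZMod 2)).ncard := by
  obtain ⟨m, hm⟩ := h8
  have hgauss := hD.weightEnumerator_dual2_one_I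
  rw [← weightEnumerator_sdiff_add hD.subset_dual2, weightEnumerator_one_I_of_mod_four_eq_two hmod,
    hD.weightEnumerator_eq (by simp), one_pow, mul_one, neg_add_eq_iff_eq_add, hm,
    show 8 * m = 4 * (2 * m) by ring, pow_mul, one_add_I_pow_four,
    (even_two_mul m).neg_pow] at hgauss
  have hcard : (D : Set (ι → ZMod 2)).ncard =
      (dual2 (D : Set (ι → ZMod 2)) \ D).ncard + 4 ^ (2 * m) := by exact_mod_cast hgauss
  have hpos : 0 < 4 ^ (2 * m) := by positivity
  omega

theorem DoublyEven.exists_le_selfDual2 {D₀ : Submodule (ZMod 2) (ι → ZMod 2)}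
    (hD₀ : DoublyEven (D₀ : Set (ι → ZMod 2))) (h8 : 8 ∣ Fintype.card ι) :
    ∃ D, D₀ ≤ D ∧ SelfDual2 D ∧ DoublyEven (D : Set (ι → ZMod 2)) := by
  obtain ⟨D, hle, hmax⟩ := (Set.toFinite {D : Submodule (ZMod 2) (ι → ZMod 2) |
    DoublyEven (D : Set (ι → ZMod 2))}).exists_le_maximal hD₀
  have hD : DoublyEven (D : Set (ι → ZMod 2)) := hmax.prop
  have hmem : ∀ x ∈ dual2 (D : Set (ι → ZMod 2)), 4 ∣ hWt x → x ∈ D := fun x hx hx4 =>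
    hmax.le_of_ge (hD.sup_span_singleton hx hx4) le_sup_left
      (Submodule.mem_sup_right (Submodule.mem_span_singleton_self x))
  have hone : 1 ∈ D := hmem 1 hD.one_mem_dual2 (hWt_one (ι := ι) ▸ dvd_trans (by norm_num) h8)
  refine ⟨D, hle, hD.subset_dual2.antisymm fun x hx => ?_, hD⟩
  by_contra hxD
  have hlt := hD.ncard_sdiff_lt h8 fun y hy => by
    obtain ⟨m, hm⟩ := even_hWt_of_mem_dual2 hone hy.1
    have hndvd := mt (hmem y hy.1) hy.2
    omega
  have hcoset : ∀ y ∈ (D : Set (ι → ZMod 2)), x + y ∈ dual2 (D : Set (ι → ZMod 2)) \ D :=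
    fun y hy => ⟨add_mem_dual2 hx (hD.subset_dual2 hy),
      fun hxy => hxD ((D.add_mem_iff_left hy).mp hxy)⟩
  exact hlt.not_ge (Set.ncard_le_ncard_of_injOn (x + ·) hcoset (add_right_injective x).injOn)

end DoublyEven

section MinimumWeight

lemma minHam_le_hWt {D : Set (ι → ZMod 2)} {x : ι → ZMod 2} (hx : x ∈ D) (hx0 : x ≠ 0) :
    minHam D ≤ hWt x :=
  Nat.sInf_le ⟨x, hx, hx0, rfl⟩

lemma minLee_le_leeWt {C : Set (ι → ZMod 4)} {x : ι → ZMod 4} (hx : x ∈ C) (hx0 : x ≠ 0) :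
    minLee C ≤ leeWt x :=
  Nat.sInf_le ⟨x, hx, hx0, rfl⟩

lemma exists_hWt_eq_minHam {D : Set (ι → ZMod 2)} (hD : ∃ x ∈ D, x ≠ 0) :
    ∃ x ∈ D, x ≠ 0 ∧ hWt x = minHam D :=
  Nat.sInf_mem (s := {d | ∃ x ∈ D, x ≠ 0 ∧ hWt x = d})
    (let ⟨x, hx, hx0⟩ := hD; ⟨hWt x, x, hx, hx0, rfl⟩)

lemma SelfDual2.exists_ne_zero [Nonempty ι] {D : Submodule (ZMod 2) (ι → ZMod 2)}
    (hsd : SelfDual2 D) (hD : DoublyEven (D : Set (ι → ZMod 2))) :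
    ∃ x ∈ (D : Set (ι → ZMod 2)), x ≠ 0 :=
  ⟨1, hsd.one_mem hD, one_ne_zero⟩

lemma DoublyEven.four_dvd_minHam {D : Set (ι → ZMod 2)} (hD : DoublyEven D)
    (hne : ∃ x ∈ D, x ≠ 0) : 4 ∣ minHam D := by
  obtain ⟨x, hx, -, hmin⟩ := exists_hWt_eq_minHam hne
  exact hmin ▸ hD x hx

end MinimumWeight

section MallowsSloane

open PowerSeries

lemma X_pow_dvd_weightEnumerator_sub_one {R : Type*} [CommRing R] {D : Set (ι → ZMod 2)}
    (h0 : 0 ∈ D) {d : ℕ} (hd : ∀ x ∈ D, x ≠ 0 → d ≤ hWt x) :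
    (X : R⟦X⟧) ^ d ∣ weightEnumerator D 1 X - 1 := by
  classical
  have hsplit := add_sum_erase D.toFinite.toFinset
    (fun x => (1 : R⟦X⟧) ^ (Fintype.card ι - hWt x) * X ^ hWt x) (a := 0) (by simpa using h0)
  simp only [hWt_zero, one_pow, one_mul, pow_zero] at hsplit
  simp only [weightEnumerator, one_pow, one_mul, ← hsplit, add_sub_cancel_left]
  refine dvd_sum fun x hx => pow_dvd_pow X ?_
  obtain ⟨hx0, hx⟩ := mem_erase.mp hx
  exact hd x (by simpa using hx) hx0

lemma weightEnumerator_one_add_X_one_sub_X {D : Submodule (ZMod 2) (ι → ZMod 2)}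
    (hsd : SelfDual2 D) :
    weightEnumerator (D : Set (ι → ZMod 2)) (1 + X : ℚ⟦X⟧) (1 - X) =
      ((D : Set (ι → ZMod 2)).ncard : ℚ) • weightEnumerator (D : Set (ι → ZMod 2)) 1 X := by
  have h2 : (2 : ℚ⟦X⟧) ≠ 0 := by
    rw [← map_ofNat C 2]
    exact (map_ne_zero_iff _ C_injective).mpr two_ne_zero
  have hsd' : (D : Set (ι → ZMod 2)) = dual2 (D : Set (ι → ZMod 2)) := hsd
  rw [weightEnumerator_add_sub h2, ← hsd', smul_eq_C_mul, map_natCast]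

/-- The linear functional of the linear programming argument for the Mallows–Sloane bound, on forms
of degree `n` written in `X`. The two polar derivatives amount to `∂²/∂a∂b`, which annihilates the
contributions `a ^ n` and `b ^ n` of the codewords `0` and `1`. -/
noncomputable def mallowsSloaneFunctional (a r n : ℕ) : ℚ⟦X⟧ →ₗ[ℚ] ℚ :=
  coeff r ∘ₗ LinearMap.mulRight ℚ (testSeries a r) ∘ₗ polarDeriv 1 (n - 1) ∘ₗ polarDeriv (-1) n

lemma mallowsSloaneFunctional_apply (a r n : ℕ) (f : ℚ⟦X⟧) :
    mallowsSloaneFunctional a r n f =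
      coeff r (polarDeriv 1 (n - 1) (polarDeriv (-1) n f) * testSeries a r) := rfl

lemma mallowsSloaneFunctional_eq_zero {a r n w : ℕ} (ha : 4 ∣ a) (hn : n = 4 * r + 2 * a)
    (hw4 : 4 ∣ w) (hwn : w ≤ n) (hw : w = 0 ∨ a + 4 ≤ w) (hnw : w = n ∨ w + a + 4 ≤ n) :
    mallowsSloaneFunctional a r n ((1 + X) ^ (n - w) * (1 - X) ^ w) = 0 := by
  have hpolar := polarDeriv_polarDeriv_one_add_X_pow_mul_one_sub_X_pow (R := ℚ) (n - w) w
  rw [Nat.sub_add_cancel hwn] at hpolar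
  rw [mallowsSloaneFunctional_apply, hpolar]
  rcases hw with rfl | hw
  · simp
  rcases hnw with rfl | hnw
  · simp
  obtain ⟨i, j, hi, hj, rfl⟩ : ∃ i j, n - w - 1 = 4 * i + a + 3 ∧ w - 1 = 4 * j + a + 3 ∧
      r = i + j + 2 := ⟨(n - w - a - 4) / 4, (w - a - 4) / 4, by omega, by omega, by omega⟩
  rw [hi, hj, mul_assoc, coeff_C_mul, coeff_mul_testSeries_eq_zero, mul_zero]

lemma mallowsSloaneFunctional_of_X_pow_dvd_sub_one {a r n : ℕ} {f : ℚ⟦X⟧}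
    (hf : X ^ (r + 3) ∣ f - 1) :
    mallowsSloaneFunctional a r n f = n * (n - 1 : ℕ) * coeff r (testSeries a r) := by
  have hdvd : X ^ (r + 1) ∣ polarDeriv (1 : ℚ) (n - 1) (polarDeriv (-1) n (f - 1)) :=
    X_pow_dvd_polarDeriv _ _ (X_pow_dvd_polarDeriv _ _ hf)
  have hvanish : mallowsSloaneFunctional a r n (f - 1) = 0 :=
    X_pow_dvd_iff.mp (dvd_mul_of_dvd_left hdvd _) r r.lt_succ_self
  rw [map_sub, sub_eq_zero] at hvanish
  rw [hvanish, mallowsSloaneFunctional_apply, polarDeriv_polarDeriv_one, coeff_C_mul]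

lemma SelfDual2.exists_hWt_lt {D : Submodule (ZMod 2) (ι → ZMod 2)} (hsd : SelfDual2 D)
    (hD : DoublyEven (D : Set (ι → ZMod 2))) {a r : ℕ} (ha : 4 ∣ a)
    (hn : Fintype.card ι = 4 * r + 2 * a) (hr : Even r) (hra : r + 1 < a) :
    ∃ x ∈ D, x ≠ 0 ∧ hWt x < a + 4 := by
  by_contra! hlow
  have hone := hsd.one_mem hD
  have hvanish : ∀ x ∈ D, mallowsSloaneFunctional a r (Fintype.card ι)
      ((1 + X) ^ (Fintype.card ι - hWt x) * (1 - X) ^ hWt x) = 0 := by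
    intro x hx
    have hgap : ∀ y ∈ D, hWt y = 0 ∨ a + 4 ≤ hWt y := fun y hy =>
      (eq_or_ne y 0).imp (fun h => by rw [h, hWt_zero]) (hlow y hy)
    have hcompl := hWt_add_one x
    refine mallowsSloaneFunctional_eq_zero ha hn (hD x hx) (hWt_le_card x) (hgap x hx) ?_
    exact (hgap (x + 1) (D.add_mem hx hone)).imp (by omega) (by omega)
  have hdvd : X ^ (r + 3) ∣ weightEnumerator (D : Set (ι → ZMod 2)) (1 : ℚ⟦X⟧) X - 1 :=
    (pow_dvd_pow X (by omega)).trans (X_pow_dvd_weightEnumerator_sub_one D.zero_mem hlow)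
  have hzero := congrArg (mallowsSloaneFunctional a r (Fintype.card ι))
    (weightEnumerator_one_add_X_one_sub_X hsd)
  rw [weightEnumerator, map_sum, sum_eq_zero (by simpa using hvanish), map_smul,
    mallowsSloaneFunctional_of_X_pow_dvd_sub_one hdvd] at hzero
  have hcard : (D : Set (ι → ZMod 2)).ncard ≠ 0 := Set.ncard_ne_zero_of_mem D.zero_mem
  have hlen : Fintype.card ι ≠ 0 ∧ Fintype.card ι - 1 ≠ 0 := by omega
  have hcoeff := coeff_testSeries_pos hr hra
  simp [hcard, hlen, hcoeff.ne'] at hzero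

theorem SelfDual2.minHam_le [Nonempty ι] {D : Submodule (ZMod 2) (ι → ZMod 2)}
    (hsd : SelfDual2 D) (hD : DoublyEven (D : Set (ι → ZMod 2))) :
    minHam (D : Set (ι → ZMod 2)) ≤ 4 * (Fintype.card ι / 24) + 4 := by
  obtain ⟨m, hm⟩ := hsd.eight_dvd_card hD
  have hpos : 0 < Fintype.card ι := Fintype.card_pos
  obtain ⟨r, hr⟩ : ∃ r, r + (Fintype.card ι / 24 + 1) = m :=
    ⟨m - (Fintype.card ι / 24 + 1), by omega⟩
  obtain ⟨x, hx, hx0, hlt⟩ := hsd.exists_hWt_lt hD (a := 4 * (Fintype.card ι / 24) + 4)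
    (r := 2 * r) (by omega) (by omega) (even_two_mul r) (by omega)
  have hle := minHam_le_hWt hx hx0
  have hdvd := hD.four_dvd_minHam ⟨x, hx, hx0⟩
  omega

end MallowsSloane

section Residue

/-- The residue code of a linear `ZMod 4`-code as a binary linear code. -/
def residueCode (C : Submodule (ZMod 4) (ι → ZMod 4)) : Submodule (ZMod 2) (ι → ZMod 2) where
  carrier := residue (C : Set (ι → ZMod 4))
  zero_mem' := ⟨0, C.zero_mem, by funext i; simp [res2]⟩
  add_mem' := by
    rintro _ _ ⟨x, hx, rfl⟩ ⟨y, hy, rfl⟩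
    exact ⟨x + y, C.add_mem hx hy, by funext i; simp [res2]⟩
  smul_mem' := by
    rintro c _ ⟨x, hx, rfl⟩
    obtain ⟨c, rfl⟩ := ZMod.castHom_surjective (by norm_num : 2 ∣ 4) c
    exact ⟨c • x, C.smul_mem c hx, by funext i; simp [res2]⟩

lemma natCast_hWt_res2 (x : ι → ZMod 4) : (hWt (res2 x) : ZMod 4) = x ⬝ᵥ x := by
  have hcoord : ∀ a : ZMod 4,
      (if ZMod.castHom (by norm_num : 2 ∣ 4) (ZMod 2) a ≠ 0 then 1 else 0) = a * a := by decide
  rw [hWt, natCast_card_filter]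
  exact sum_congr rfl fun i _ => hcoord (x i)

lemma SelfDualZ4.doublyEven_residueCode {C : Submodule (ZMod 4) (ι → ZMod 4)}
    (hC : SelfDualZ4 C) : DoublyEven (residueCode C : Set (ι → ZMod 2)) := by
  rintro _ ⟨x, hx, rfl⟩
  have hself : x ∈ dualZ4 (C : Set (ι → ZMod 4)) := hC ▸ hx
  rw [← ZMod.natCast_eq_zero_iff, natCast_hWt_res2]
  exact hself x hx

/-- The image of a binary vector under the embedding `2 * · : ZMod 2 → ZMod 4`. -/
def twoLift (x : ι → ZMod 2) : ι → ZMod 4 := fun i => if x i = 0 then 0 else 2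

lemma twoLift_ne_zero {α : Type*} {x : α → ZMod 2} (hx : x ≠ 0) : twoLift x ≠ 0 := by
  obtain ⟨i, hi⟩ := Function.ne_iff.mp hx
  exact Function.ne_iff.mpr ⟨i, (if_neg hi).trans_ne (by decide : (2 : ZMod 4) ≠ 0)⟩

lemma leeWt_twoLift (x : ι → ZMod 2) : leeWt (twoLift x) = 2 * hWt x := by
  have hcoord : ∀ a : ZMod 2, leeVal (if a = 0 then 0 else 2) = 2 * if a ≠ 0 then 1 else 0 := by
    decide
  simp only [leeWt, twoLift, hcoord, hWt, card_filter, mul_sum]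

lemma twoLift_dotProduct (x : ι → ZMod 2) (y : ι → ZMod 4) :
    twoLift x ⬝ᵥ y = (2 * overlap x (res2 y) : ℕ) := by
  have hcoord : ∀ (a : ZMod 2) (b : ZMod 4), (if a = 0 then 0 else 2) * b = 2 *
      if a ≠ 0 ∧ ZMod.castHom (by norm_num : 2 ∣ 4) (ZMod 2) b ≠ 0 then 1 else 0 := by decide
  rw [Nat.cast_mul, overlap, natCast_card_filter, mul_sum]
  exact sum_congr rfl fun i _ => hcoord (x i) (y i)

lemma SelfDualZ4.twoLift_mem {C : Submodule (ZMod 4) (ι → ZMod 4)} (hC : SelfDualZ4 C)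
    {x : ι → ZMod 2} (hx : x ∈ dual2 (residueCode C : Set (ι → ZMod 2))) : twoLift x ∈ C := by
  rw [← SetLike.mem_coe, hC]
  intro y hy
  obtain ⟨m, hm⟩ := dotProduct_eq_zero_iff_even_overlap.mp (hx (res2 y) ⟨y, hy, rfl⟩)
  refine (twoLift_dotProduct x y).trans ((ZMod.natCast_eq_zero_iff _ _).mpr ?_)
  omega

lemma SelfDualZ4.minLee_le_two_mul_minHam {C : Submodule (ZMod 4) (ι → ZMod 4)}
    (hC : SelfDualZ4 C) {D : Set (ι → ZMod 2)}
    (hDC : D ⊆ dual2 (residueCode C : Set (ι → ZMod 2))) (hne : ∃ x ∈ D, x ≠ 0) :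
    minLee (C : Set (ι → ZMod 4)) ≤ 2 * minHam D := by
  obtain ⟨x, hx, hx0, hmin⟩ := exists_hWt_eq_minHam hne
  rw [← hmin, ← leeWt_twoLift]
  exact minLee_le_leeWt (hC.twoLift_mem (hDC hx)) (twoLift_ne_zero hx0)

end Residue

end Z4Note

open Z4Note in
theorem minLee_le_of_no_extremal_length24k_general {ι : Type*} [Fintype ι] [Nonempty ι]
    (h8 : 8 ∣ Fintype.card ι)
    (hno : ¬ ∃ D : Submodule (ZMod 2) (ι → ZMod 2),
        SelfDual2 D ∧ DoublyEven (D : Set (ι → ZMod 2)) ∧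
        minHam (D : Set (ι → ZMod 2)) = 4 * (Fintype.card ι / 24) + 4)
    (C : Submodule (ZMod 4) (ι → ZMod 4)) (hsd : SelfDualZ4 C) :
    minLee (C : Set (ι → ZMod 4)) ≤ 8 * (Fintype.card ι / 24) := by
  obtain ⟨D, hle, hDsd, hD⟩ := hsd.doublyEven_residueCode.exists_le_selfDual2 h8
  have hne := hDsd.exists_ne_zero hD
  have hlee := hsd.minLee_le_two_mul_minHam (hD.subset_dual2.trans (dual2_antitone hle)) hne
  have hMS := hDsd.minHam_le hD
  have hnotextremal : minHam (D : Set (ι → ZMod 2)) ≠ 4 * (Fintype.card ι / 24) + 4 :=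
    fun h => hno ⟨D, hDsd, hD, h⟩
  have hdvd := hD.four_dvd_minHam hne
  omega

open Z4Note in
/-- if there is no binary extremal doubly even self-dual code of length
`24k`, then no self-dual `ZMod 4`-code of length `24k` has minimum Lee weight `8k+2`
or `8k+4`, and (with Rains's bound) its minimum Lee weight is at most `8k`. -/
theorem minLee_le_of_no_extremal_length24k
    (k : ℕ) (hk : 0 < k)
    (hno : ¬ ∃ D : Submodule (ZMod 2) (Fin (24 * k) → ZMod 2),
        SelfDual2 D ∧ DoublyEven (D : Set (Fin (24 * k) → ZMod 2)) ∧
        minHam (D : Set (Fin (24 * k) → ZMod 2)) = 4 * k + 4)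
    (C : Submodule (ZMod 4) (Fin (24 * k) → ZMod 4)) (hsd : SelfDualZ4 C) :
    (minLee (C : Set (Fin (24 * k) → ZMod 4)) ≠ 8 * k + 2 ∧
     minLee (C : Set (Fin (24 * k) → ZMod 4)) ≠ 8 * k + 4) ∧
    minLee (C : Set (Fin (24 * k) → ZMod 4)) ≤ 8 * k := by
  have : Nonempty (Fin (24 * k)) := ⟨⟨0, by omega⟩⟩
  have hdiv : Fintype.card (Fin (24 * k)) / 24 = k := by simp
  have hle := minLee_le_of_no_extremal_length24k_general
    (by rw [Fintype.card_fin]; omega) (by rwa [hdiv]) C hsd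
  omega
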